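/- arXiv:2507.15160 — 9 statements merged into one kernel-verified Lean document; each statement's English description precedes it below -/
import Mathlib

section
/- Let a : ℕ → ℂ and R > 0 be such that the power series ∑_{n=0}^∞ a_n w^n converges absolutely for every complex w with |w| < R; write f(w) = ∑_{n=0}^∞ a_n w^n for |w| < R. Let λ, x, y, z be complex numbers with |λ| < 1, |y| < |x|, and |x·z| < R. Then both series below converge and ∑_{n=0}^∞ a_n · x^{n+1}/(x − λ^n y) · z^n = ∑_{k=0}^∞ (y/x)^k · f(λ^k x z). -/
/-!
Since `x / (x - λⁿ y) = ∑ₖ (λⁿ y / x)ᵏ`, the left-hand side is a double series with terms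
`aₙ (x z)ⁿ (λⁿ y / x)ᵏ`. It is dominated by the product of the absolutely convergent series
`∑ₙ |aₙ (x z)ⁿ|` and the geometric series of ratio `|y / x|`, so the order of summation may be
exchanged; summing over `n` first gives `(y / x)ᵏ f(λᵏ x z)`.
-/

section DoubleSeries

variable {ι A : Type*} {r : ℝ}

theorem summable_mul_pow_prod [SeminormedRing A] [NormOneClass A] [CompleteSpace A]
    {c u : ι → A} (hc : Summable fun i => ‖c i‖) (hr₀ : 0 ≤ r) (hr₁ : r < 1)
    (hu : ∀ i, ‖u i‖ ≤ r) : Summable fun p : ι × ℕ => c p.1 * u p.1 ^ p.2 := by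
  have hmajorant : Summable fun p : ι × ℕ => ‖c p.1‖ * r ^ p.2 :=
    hc.mul_of_nonneg (summable_geometric_of_lt_one hr₀ hr₁) (fun _ => norm_nonneg _)
      (fun _ => pow_nonneg hr₀ _)
  refine .of_norm_bounded hmajorant fun ⟨i, k⟩ => ?_
  calc ‖c i * u i ^ k‖ ≤ ‖c i‖ * ‖u i‖ ^ k :=
        (norm_mul_le _ _).trans (by gcongr; exact norm_pow_le _ _)
    _ ≤ ‖c i‖ * r ^ k := by gcongr; exact hu i

theorem summable_tsum_mul_pow [NormedRing A] [NormOneClass A] [CompleteSpace A]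
    {c u : ι → A} (hc : Summable fun i => ‖c i‖) (hr₀ : 0 ≤ r) (hr₁ : r < 1)
    (hu : ∀ i, ‖u i‖ ≤ r) : Summable fun k : ℕ => ∑' i, c i * u i ^ k :=
  (summable_mul_pow_prod hc hr₀ hr₁ hu).prod_symm.prod

variable [NormedDivisionRing A]

theorem tsum_mul_pow_of_norm_lt_one {c u : A} (hu : ‖u‖ < 1) :
    ∑' k : ℕ, c * u ^ k = c * (1 - u)⁻¹ := by
  rw [tsum_mul_left, tsum_geometric_of_norm_lt_one hu]

variable [CompleteSpace A] {c u : ι → A}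

theorem summable_mul_inv_one_sub (hc : Summable fun i => ‖c i‖) (hr₀ : 0 ≤ r) (hr₁ : r < 1)
    (hu : ∀ i, ‖u i‖ ≤ r) : Summable fun i => c i * (1 - u i)⁻¹ :=
  (summable_mul_pow_prod hc hr₀ hr₁ hu).prod.congr
    fun i => tsum_mul_pow_of_norm_lt_one (c := c i) ((hu i).trans_lt hr₁)

theorem tsum_mul_inv_one_sub (hc : Summable fun i => ‖c i‖) (hr₀ : 0 ≤ r) (hr₁ : r < 1)
    (hu : ∀ i, ‖u i‖ ≤ r) :
    ∑' i, c i * (1 - u i)⁻¹ = ∑' k : ℕ, ∑' i, c i * u i ^ k :=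
  calc ∑' i, c i * (1 - u i)⁻¹ = ∑' i, ∑' k : ℕ, c i * u i ^ k :=
        tsum_congr fun i => (tsum_mul_pow_of_norm_lt_one ((hu i).trans_lt hr₁)).symm
    _ = ∑' k : ℕ, ∑' i, c i * u i ^ k :=
        (summable_mul_pow_prod hc hr₀ hr₁ hu).tsum_comm (f := fun i k => c i * u i ^ k) |>.symm

end DoubleSeries

theorem pow_succ_div_sub_mul_pow {K : Type*} [Field K] {x : K} (hx : x ≠ 0) (t y z : K) (n : ℕ) :
    x ^ (n + 1) / (x - t * y) * z ^ n = (x * z) ^ n * (1 - t * (y / x))⁻¹ := by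
  have hfactor : 1 - t * (y / x) = (x - t * y) / x := by field_simp
  rw [hfactor, inv_div, mul_pow, pow_succ]
  ring

theorem tsum_mul_pow_mul_pow {K : Type*} [Semifield K] [TopologicalSpace K]
    [IsTopologicalSemiring K] [T2Space K] (a : ℕ → K) (l q w : K) (k : ℕ) :
    ∑' n : ℕ, a n * w ^ n * (l ^ n * q) ^ k = q ^ k * ∑' n : ℕ, a n * (l ^ k * w) ^ n := by
  rw [← tsum_mul_left]
  refine tsum_congr fun n => ?_
  ring

theorem generalized_lambert_series_general {𝕜 : Type*} [NormedField 𝕜] [CompleteSpace 𝕜]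
    (a : ℕ → 𝕜) {l x y z : 𝕜} (ha : Summable fun n : ℕ => ‖a n * (x * z) ^ n‖)
    (hl : ‖l‖ ≤ 1) (hyx : ‖y‖ < ‖x‖) :
    Summable (fun n : ℕ => a n * (x ^ (n + 1) / (x - l ^ n * y)) * z ^ n) ∧
    Summable (fun k : ℕ => (y / x) ^ k * ∑' m : ℕ, a m * (l ^ k * x * z) ^ m) ∧
    ∑' n : ℕ, a n * (x ^ (n + 1) / (x - l ^ n * y)) * z ^ n
      = ∑' k : ℕ, (y / x) ^ k * ∑' m : ℕ, a m * (l ^ k * x * z) ^ m := by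
  have hx : x ≠ 0 := norm_pos_iff.mp ((norm_nonneg y).trans_lt hyx)
  have hq : ‖y / x‖ < 1 := by
    rwa [norm_div, div_lt_one (norm_pos_iff.mpr hx)]
  have hratio (n : ℕ) : ‖l ^ n * (y / x)‖ ≤ ‖y / x‖ := by
    rw [norm_mul, norm_pow]
    exact mul_le_of_le_one_left (norm_nonneg _) (pow_le_one₀ (norm_nonneg _) hl)
  simp only [mul_assoc (a _), pow_succ_div_sub_mul_pow hx, mul_assoc (l ^ _) x z]
  simp only [← mul_assoc (a _), ← tsum_mul_pow_mul_pow]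
  exact ⟨summable_mul_inv_one_sub ha (norm_nonneg _) hq hratio,
    summable_tsum_mul_pow ha (norm_nonneg _) hq hratio,
    tsum_mul_inv_one_sub ha (norm_nonneg _) hq hratio⟩

/-- The generalized Lambert series identity:
`∑ₙ aₙ x^(n+1)/(x − λ^n y) zⁿ = ∑ₖ (y/x)ᵏ f(λᵏ x z)` where `f(w) = ∑ₙ aₙ wⁿ`. -/
theorem generalized_lambert_series (a : ℕ → ℂ) (R : ℝ) (hR : 0 < R)
    (habs : ∀ w : ℂ, ‖w‖ < R → Summable (fun n : ℕ => ‖a n * w ^ n‖))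
    (l x y z : ℂ) (hl : ‖l‖ < 1) (hyx : ‖y‖ < ‖x‖) (hxz : ‖x * z‖ < R) :
    Summable (fun n : ℕ => a n * (x ^ (n + 1) / (x - l ^ n * y)) * z ^ n) ∧
    Summable (fun k : ℕ => (y / x) ^ k * ∑' m : ℕ, a m * (l ^ k * x * z) ^ m) ∧
    ∑' n : ℕ, a n * (x ^ (n + 1) / (x - l ^ n * y)) * z ^ n
      = ∑' k : ℕ, (y / x) ^ k * ∑' m : ℕ, a m * (l ^ k * x * z) ^ m :=
  generalized_lambert_series_general a (habs _ hxz) hl.le hyx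
end

section
/- (Mehler's formula) Let a : ℕ → ℂ and R > 0 be such that the power series ∑_{n=0}^∞ a_n u^n converges absolutely for every complex u with |u| < R; write f(u) = ∑_{n=0}^∞ a_n u^n for |u| < R. Let λ, x, y, z, w, t be complex numbers with |λ| < 1, |y| < |x|, |w| < |z|, and |t·x·z| < R. Then ∑_{n=0}^∞ a_n · x^{n+1}/(x − λ^n y) · z^{n+1}/(z − λ^n w) · t^n = ∑_{k=0}^∞ ∑_{n=0}^∞ (w/z)^k (y/x)^n f(λ^{k+n} t x z), where the right-hand side is an absolutely convergent double series. -/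
/-!
Put `u = t x z`, `p = y / x`, `q = w / z`. Expanding `f` and exchanging summations, the right-hand
side is `∑ₘ aₘ uᵐ ∑ₖₙ (q λᵐ)ᵏ (p λᵐ)ⁿ`, and the inner sum is a product of two geometric series,
equal to `x / (x - λᵐ y) · z / (z - λᵐ w)`. The exchange is legitimate because `λ ^ (k + n)` has
norm at most one, so the triple series is dominated by `∑ |q|ᵏ |p|ⁿ |aₘ uᵐ|`.
-/

section NormedCommRing

variable {ι R : Type*} [NormedCommRing R] [NormOneClass R] {c v : ι → R} {a : ℕ → R} {r u : R}

theorem norm_mul_pow_le_of_norm_le_one (hr : ‖r‖ ≤ 1) (b : R) (m : ℕ) : ‖b * r ^ m‖ ≤ ‖b‖ :=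
  (norm_mul_le _ _).trans <| mul_le_of_le_one_right (norm_nonneg _) <|
    (norm_pow_le _ _).trans (pow_le_one₀ (norm_nonneg _) hr)

theorem norm_mul_mul_pow_le_of_norm_le_one (hr : ‖r‖ ≤ 1) (b u : R) (m : ℕ) :
    ‖b * (r * u) ^ m‖ ≤ ‖b * u ^ m‖ := by
  simpa only [mul_pow, mul_left_comm, mul_comm] using
    norm_mul_pow_le_of_norm_le_one hr (b * u ^ m) m

theorem summable_norm_mul_mul_pow (hc : Summable fun i => ‖c i‖) (hv : ∀ i, ‖v i‖ ≤ 1)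
    (ha : Summable fun m => ‖a m * u ^ m‖) :
    Summable fun j : ι × ℕ => ‖c j.1 * (a j.2 * (v j.1 * u) ^ j.2)‖ := by
  refine (hc.mul_of_nonneg ha (fun _ => norm_nonneg _) fun _ => norm_nonneg _).of_nonneg_of_le
    (fun _ => norm_nonneg _) fun j => (norm_mul_le _ _).trans ?_
  gcongr
  exact norm_mul_mul_pow_le_of_norm_le_one (hv j.1) _ _ _

variable [CompleteSpace R]

theorem summable_mul_mul_pow_of_norm_le_one (ha : Summable fun m => ‖a m * u ^ m‖)
    (hr : ‖r‖ ≤ 1) : Summable fun m => a m * (r * u) ^ m :=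
  ha.of_norm_bounded fun _ => norm_mul_mul_pow_le_of_norm_le_one hr _ _ _

theorem summable_norm_mul_tsum_mul_pow (hc : Summable fun i => ‖c i‖) (hv : ∀ i, ‖v i‖ ≤ 1)
    (ha : Summable fun m => ‖a m * u ^ m‖) :
    Summable fun i => ‖c i * ∑' m, a m * (v i * u) ^ m‖ := by
  have h := summable_norm_mul_mul_pow hc hv ha
  refine h.prod.of_nonneg_of_le (fun _ => norm_nonneg _) fun i => ?_
  rw [← (summable_mul_mul_pow_of_norm_le_one ha (hv i)).tsum_mul_left]
  exact norm_tsum_le_tsum_norm (h.prod_factor i)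

theorem tsum_mul_tsum_mul_pow (hc : Summable fun i => ‖c i‖) (hv : ∀ i, ‖v i‖ ≤ 1)
    (ha : Summable fun m => ‖a m * u ^ m‖) :
    ∑' i, c i * ∑' m, a m * (v i * u) ^ m = ∑' m, a m * u ^ m * ∑' i, c i * v i ^ m := by
  have hcv (m : ℕ) : Summable fun i => c i * v i ^ m :=
    hc.of_norm_bounded fun i => norm_mul_pow_le_of_norm_le_one (hv i) _ _
  have hprod : Summable (Function.uncurry fun i m => c i * (a m * (v i * u) ^ m)) :=
    (summable_norm_mul_mul_pow hc hv ha).of_norm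
  calc ∑' i, c i * ∑' m, a m * (v i * u) ^ m
    _ = ∑' i, ∑' m, c i * (a m * (v i * u) ^ m) := tsum_congr fun i =>
        ((summable_mul_mul_pow_of_norm_le_one ha (hv i)).tsum_mul_left (c i)).symm
    _ = ∑' m, ∑' i, c i * (a m * (v i * u) ^ m) := hprod.tsum_comm.symm
    _ = ∑' m, ∑' i, a m * u ^ m * (c i * v i ^ m) :=
        tsum_congr fun m => tsum_congr fun i => by ring
    _ = ∑' m, a m * u ^ m * ∑' i, c i * v i ^ m :=
        tsum_congr fun m => (hcv m).tsum_mul_left (a m * u ^ m)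

end NormedCommRing

theorem pow_succ_div_sub_mul {K : Type*} [Field K] {x : K} (hx : x ≠ 0) (y r : K) (n : ℕ) :
    x ^ (n + 1) / (x - r * y) = x ^ n * (1 - y / x * r)⁻¹ := by
  have hfactor : x - r * y = x * (1 - y / x * r) := by field_simp
  rw [hfactor, pow_succ', mul_div_mul_left _ _ hx, div_eq_mul_inv]

theorem norm_div_lt_one_of_norm_lt {K : Type*} [NormedDivisionRing K] {x y : K} (h : ‖y‖ < ‖x‖) :
    ‖y / x‖ < 1 := by
  rw [norm_div]
  exact (div_lt_one ((norm_nonneg y).trans_lt h)).2 h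

section NormedField

variable {𝕜 : Type*} [NormedField 𝕜] [CompleteSpace 𝕜]

theorem tsum_pow_mul_pow_of_norm_lt_one {q p : 𝕜} (hq : ‖q‖ < 1) (hp : ‖p‖ < 1) :
    ∑' i : ℕ × ℕ, q ^ i.1 * p ^ i.2 = (1 - q)⁻¹ * (1 - p)⁻¹ := by
  rw [← tsum_geometric_of_norm_lt_one hq, ← tsum_geometric_of_norm_lt_one hp,
    tsum_mul_tsum_of_summable_norm (summable_norm_geometric_of_norm_lt_one hq)
      (summable_norm_geometric_of_norm_lt_one hp)]

theorem tsum_pow_mul_pow_mul_pow_add_pow {q p l : 𝕜} (hq : ‖q‖ < 1) (hp : ‖p‖ < 1)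
    (hl : ‖l‖ ≤ 1) (m : ℕ) :
    ∑' i : ℕ × ℕ, q ^ i.1 * p ^ i.2 * (l ^ (i.1 + i.2)) ^ m =
      (1 - q * l ^ m)⁻¹ * (1 - p * l ^ m)⁻¹ := by
  have hmul {r : 𝕜} (hr : ‖r‖ < 1) : ‖r * l ^ m‖ < 1 :=
    (norm_mul_pow_le_of_norm_le_one hl r m).trans_lt hr
  rw [← tsum_pow_mul_pow_of_norm_lt_one (hmul hq) (hmul hp)]
  exact tsum_congr fun i => by ring

theorem generalized_lambert_mehler_general {a : ℕ → 𝕜} {l x y z w t : 𝕜} (hl : ‖l‖ ≤ 1)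
    (hyx : ‖y‖ < ‖x‖) (hwz : ‖w‖ < ‖z‖) (ha : Summable fun m => ‖a m * (t * x * z) ^ m‖) :
    Summable (fun i : ℕ × ℕ =>
      ‖(w / z) ^ i.1 * (y / x) ^ i.2 * ∑' m, a m * (l ^ (i.1 + i.2) * t * x * z) ^ m‖) ∧
    ∑' n, a n * (x ^ (n + 1) / (x - l ^ n * y)) * (z ^ (n + 1) / (z - l ^ n * w)) * t ^ n =
      ∑' k, ∑' n, (w / z) ^ k * (y / x) ^ n * ∑' m, a m * (l ^ (k + n) * t * x * z) ^ m := by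
  have hx : x ≠ 0 := norm_pos_iff.1 ((norm_nonneg y).trans_lt hyx)
  have hz : z ≠ 0 := norm_pos_iff.1 ((norm_nonneg w).trans_lt hwz)
  have hq := norm_div_lt_one_of_norm_lt hwz
  have hp := norm_div_lt_one_of_norm_lt hyx
  have hc : Summable fun i : ℕ × ℕ => ‖(w / z) ^ i.1 * (y / x) ^ i.2‖ :=
    (summable_norm_geometric_of_norm_lt_one hq).mul_norm (summable_norm_geometric_of_norm_lt_one hp)
  have hv (i : ℕ × ℕ) : ‖l ^ (i.1 + i.2)‖ ≤ 1 :=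
    (norm_pow_le _ _).trans (pow_le_one₀ (norm_nonneg _) hl)
  have hassoc (j : ℕ) : l ^ j * t * x * z = l ^ j * (t * x * z) := by ring
  simp only [hassoc]
  have hsum := summable_norm_mul_tsum_mul_pow hc hv ha
  refine ⟨hsum, ?_⟩
  rw [← hsum.of_norm.tsum_prod, tsum_mul_tsum_mul_pow hc hv ha]
  refine tsum_congr fun m => ?_
  rw [tsum_pow_mul_pow_mul_pow_add_pow hq hp hl, pow_succ_div_sub_mul hx, pow_succ_div_sub_mul hz]
  ring

end NormedField

/-- Mehler's formula for generalized Lambert series. -/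
theorem generalized_lambert_mehler (a : ℕ → ℂ) (R : ℝ) (hR : 0 < R)
    (habs : ∀ u : ℂ, ‖u‖ < R → Summable (fun n : ℕ => ‖a n * u ^ n‖))
    (l x y z w t : ℂ) (hl : ‖l‖ < 1) (hyx : ‖y‖ < ‖x‖) (hwz : ‖w‖ < ‖z‖)
    (htxz : ‖t * x * z‖ < R) :
    Summable (fun p : ℕ × ℕ =>
      ‖(w / z) ^ p.1 * (y / x) ^ p.2 *
        ∑' m : ℕ, a m * (l ^ (p.1 + p.2) * t * x * z) ^ m‖) ∧
    ∑' n : ℕ, a n * (x ^ (n + 1) / (x - l ^ n * y)) *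
        (z ^ (n + 1) / (z - l ^ n * w)) * t ^ n
      = ∑' k : ℕ, ∑' n : ℕ, (w / z) ^ k * (y / x) ^ n *
          ∑' m : ℕ, a m * (l ^ (k + n) * t * x * z) ^ m :=
  generalized_lambert_mehler_general hl.le hyx hwz (habs _ htxz)
end

section
/- Let a : ℕ → ℂ and R > 0 be such that the power series ∑_{n=0}^∞ a_n u^n converges absolutely for |u| < R, with sum f(u). Let m ≥ 1, let λ₁,…,λ_m, x₁,…,x_m, y₁,…,y_m and z be complex numbers with |λ_i| < 1 and |y_i| < |x_i| for each i, and |x₁⋯x_m · z| < R. Then ∑_{n=0}^∞ a_n (∏_{i=1}^m x_i^{n+1}/(x_i − λ_i^n y_i)) z^n = ∑_{k₁,…,k_m ≥ 0} (∏_{i=1}^m (y_i/x_i)^{k_i}) · f(λ₁^{k₁}⋯λ_m^{k_m} x₁⋯x_m z), where the right-hand side is an absolutely convergent m-fold series (a sum over (k₁,…,k_m) ∈ ℕ^m). -/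
/-!
Put `r i = y i / x i` and `u = (∏ i, x i) * z`. Each factor of the `n`-th Lambert term is
`x i ^ n / (1 - l i ^ n * r i)`; expanding it as a geometric series turns the left-hand side into
the iterated sum over `n`, then `k`, of `(∏ i, r i ^ k i) * (a n * ((∏ i, l i ^ k i) * u) ^ n)`.
Since `‖l i‖ ≤ 1`, this double family is dominated by the product of the multiple geometric series
in the `r i` with the power series at `u`, so the two summations may be exchanged.
-/

section ProductOfSeries

variable {ι R : Type*} [hι : Fintype ι] [NormedCommRing R]

theorem summable_norm_prod_pi {κ : ι → Type*} {f : ∀ i, κ i → R}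
    (hf : ∀ i, Summable fun j => ‖f i j‖) :
    Summable fun k : ∀ i, κ i => ‖∏ i, f i (k i)‖ := by
  revert κ
  apply @Fintype.induction_empty_option _ ?of_equiv ?empty ?option ι hι
  case of_equiv =>
    intro α β _ e ih κ f hf
    let := Fintype.ofEquiv β e.symm
    rw [← (e.piCongrLeft κ).summable_iff]
    refine (ih fun i => hf (e i)).congr fun k => ?_
    simp only [Function.comp_apply, ← e.prod_comp, Equiv.piCongrLeft_apply_apply]
  case empty =>
    intro κ f _
    exact Summable.of_finite
  case option =>
    intro α _ ih κ f hf
    rw [← Equiv.piOptionEquivProd.symm.summable_iff]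
    refine ((hf none).mul_norm (ih fun i => hf (some i))).congr fun p => ?_
    simp only [Function.comp_apply, Fintype.prod_option, Equiv.piOptionEquivProd_symm_apply]

theorem hasSum_prod_pi {κ : ι → Type*} {f : ∀ i, κ i → R} {s : ι → R}
    (hf : ∀ i, Summable fun j => ‖f i j‖) (hs : ∀ i, HasSum (f i) (s i)) :
    HasSum (fun k : ∀ i, κ i => ∏ i, f i (k i)) (∏ i, s i) := by
  revert κ s
  apply @Fintype.induction_empty_option _ ?of_equiv ?empty ?option ι hι
  case of_equiv =>
    intro α β _ e ih κ f s hf hs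
    let := Fintype.ofEquiv β e.symm
    rw [← (e.piCongrLeft κ).hasSum_iff, ← e.prod_comp]
    refine (ih (fun i => hf (e i)) fun i => hs (e i)).congr_fun fun k => ?_
    simp only [Function.comp_apply, ← e.prod_comp, Equiv.piCongrLeft_apply_apply]
  case empty =>
    intro κ f s _ _
    simp
  case option =>
    intro α _ ih κ f s hf hs
    have tail := ih (fun i => hf (some i)) fun i => hs (some i)
    have summable_mul := summable_mul_of_summable_norm' (hf none) (hs none).summable
      (summable_norm_prod_pi fun i => hf (some i)) tail.summable
    rw [← Equiv.piOptionEquivProd.symm.hasSum_iff, Fintype.prod_option]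
    refine ((hs none).mul tail summable_mul).congr_fun fun p => ?_
    simp only [Function.comp_apply, Fintype.prod_option, Equiv.piOptionEquivProd_symm_apply]

end ProductOfSeries

section GeometricSeries

variable {ι 𝕜 : Type*} [Fintype ι] [NormedField 𝕜] {r : ι → 𝕜}

theorem summable_norm_prod_pow (hr : ∀ i, ‖r i‖ < 1) :
    Summable fun k : ι → ℕ => ‖∏ i, r i ^ k i‖ :=
  summable_norm_prod_pi fun i => summable_norm_geometric_of_norm_lt_one (hr i)

theorem hasSum_prod_pow (hr : ∀ i, ‖r i‖ < 1) :
    HasSum (fun k : ι → ℕ => ∏ i, r i ^ k i) (∏ i, (1 - r i)⁻¹) :=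
  hasSum_prod_pi (fun i => summable_norm_geometric_of_norm_lt_one (hr i))
    fun i => hasSum_geometric_of_norm_lt_one (hr i)

end GeometricSeries

section DoubleFamily

variable {ι 𝕜 : Type*} [Fintype ι]

/-- The family over `(k, n)` whose sum over `n` gives the terms of the multiple power-series
expansion, and whose sum over `k` gives the terms of the Lambert series. The ratios `y i / x i` are
encoded as `r i` and the argument `(∏ i, x i) * z` of the power series as `u`. -/
def lambertTerm [CommSemiring 𝕜] (a : ℕ → 𝕜) (l r : ι → 𝕜) (u : 𝕜) (p : (ι → ℕ) × ℕ) : 𝕜 :=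
  (∏ i, r i ^ p.1 i) * (a p.2 * ((∏ i, l i ^ p.1 i) * u) ^ p.2)

theorem lambertTerm_eq_mul_prod_pow [CommSemiring 𝕜] (a : ℕ → 𝕜) (l r : ι → 𝕜) (u : 𝕜)
    (k : ι → ℕ) (n : ℕ) :
    lambertTerm a l r u (k, n) = a n * u ^ n * ∏ i, (l i ^ n * r i) ^ k i := by
  have prod_eq : ∏ i, (l i ^ n * r i) ^ k i = (∏ i, l i ^ k i) ^ n * ∏ i, r i ^ k i := by
    simp only [mul_pow, Finset.prod_mul_distrib, ← Finset.prod_pow, pow_right_comm]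
  rw [lambertTerm, prod_eq]
  ring

variable [NormedField 𝕜] {a : ℕ → 𝕜} {l r : ι → 𝕜} {u : 𝕜}

theorem norm_lambertTerm_le (hl : ∀ i, ‖l i‖ ≤ 1) (p : (ι → ℕ) × ℕ) :
    ‖lambertTerm a l r u p‖ ≤ ‖(∏ i, r i ^ p.1 i) * (a p.2 * u ^ p.2)‖ := by
  have norm_prod_le : ‖∏ i, l i ^ p.1 i‖ ≤ 1 := by
    simp only [norm_prod, norm_pow]
    exact Finset.prod_le_one (fun i _ => by positivity)
      fun i _ => pow_le_one₀ (norm_nonneg _) (hl i)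
  simp only [lambertTerm, norm_mul, norm_pow]
  gcongr
  exact mul_le_of_le_one_left (norm_nonneg u) norm_prod_le

theorem summable_norm_lambertTerm (hl : ∀ i, ‖l i‖ ≤ 1) (hr : ∀ i, ‖r i‖ < 1)
    (hu : Summable fun n => ‖a n * u ^ n‖) :
    Summable fun p => ‖lambertTerm a l r u p‖ :=
  have dominating := (summable_norm_prod_pow hr).mul_norm hu
  dominating.of_nonneg_of_le (fun _ => norm_nonneg _) (norm_lambertTerm_le hl)

theorem hasSum_lambertTerm_left (hl : ∀ i, ‖l i‖ ≤ 1) (hr : ∀ i, ‖r i‖ < 1) (n : ℕ) :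
    HasSum (fun k => lambertTerm a l r u (k, n)) (a n * u ^ n * ∏ i, (1 - l i ^ n * r i)⁻¹) := by
  have norm_ratio_lt_one (i : ι) : ‖l i ^ n * r i‖ < 1 := by
    rw [norm_mul, norm_pow]
    exact (mul_le_of_le_one_left (norm_nonneg _) (pow_le_one₀ (norm_nonneg _) (hl i))).trans_lt
      (hr i)
  simp only [lambertTerm_eq_mul_prod_pow]
  exact (hasSum_prod_pow norm_ratio_lt_one).mul_left _

theorem tsum_lambertTerm_right (k : ι → ℕ) :
    ∑' n, lambertTerm a l r u (k, n) =
      (∏ i, r i ^ k i) * ∑' n, a n * ((∏ i, l i ^ k i) * u) ^ n := by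
  simp only [lambertTerm, tsum_mul_left]

end DoubleFamily

theorem prod_pow_succ_div_sub {ι 𝕜 : Type*} [Fintype ι] [Field 𝕜] {x : ι → 𝕜}
    (hx : ∀ i, x i ≠ 0) (q y : ι → 𝕜) (n : ℕ) :
    ∏ i, x i ^ (n + 1) / (x i - q i * y i) =
      (∏ i, x i) ^ n * ∏ i, (1 - q i * (y i / x i))⁻¹ := by
  rw [← Finset.prod_pow, ← Finset.prod_mul_distrib]
  refine Finset.prod_congr rfl fun i _ => ?_
  have factor : x i - q i * y i = (1 - q i * (y i / x i)) * x i := by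
    have := hx i
    field_simp
  rw [factor, pow_succ, mul_div_mul_right _ _ (hx i), div_eq_mul_inv]

theorem multivariate_generalized_lambert_general {ι 𝕜 : Type*} [Fintype ι] [NormedField 𝕜]
    [CompleteSpace 𝕜] {a : ℕ → 𝕜} {l x y : ι → 𝕜} {z : 𝕜}
    (ha : Summable fun n => ‖a n * ((∏ i, x i) * z) ^ n‖)
    (hl : ∀ i, ‖l i‖ ≤ 1) (hyx : ∀ i, ‖y i‖ < ‖x i‖) :
    (Summable fun k : ι → ℕ =>
      ‖(∏ i, (y i / x i) ^ k i) *
        ∑' j : ℕ, a j * ((∏ i, l i ^ k i) * (∏ i, x i) * z) ^ j‖) ∧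
    HasSum (fun n : ℕ => a n * (∏ i, x i ^ (n + 1) / (x i - l i ^ n * y i)) * z ^ n)
      (∑' k : ι → ℕ, (∏ i, (y i / x i) ^ k i) *
        ∑' j : ℕ, a j * ((∏ i, l i ^ k i) * (∏ i, x i) * z) ^ j) := by
  have norm_x_pos (i : ι) : 0 < ‖x i‖ := (norm_nonneg _).trans_lt (hyx i)
  have norm_ratio_lt_one (i : ι) : ‖y i / x i‖ < 1 := by
    rw [norm_div]
    exact (div_lt_one (norm_x_pos i)).2 (hyx i)
  have summable_norm := summable_norm_lambertTerm hl norm_ratio_lt_one ha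
  simp only [mul_assoc _ (∏ i, x i) z, ← tsum_lambertTerm_right]
  refine ⟨.of_nonneg_of_le (fun _ => norm_nonneg _)
    (fun k => norm_tsum_le_tsum_norm (summable_norm.prod_factor k)) summable_norm.prod, ?_⟩
  rw [← summable_norm.of_norm.tsum_prod]
  have hasSum_swap := (Equiv.prodComm _ _).hasSum_iff.2 summable_norm.of_norm.hasSum
  refine (hasSum_swap.prod_fiberwise
    (hasSum_lambertTerm_left hl norm_ratio_lt_one)).congr_fun fun n => ?_
  rw [prod_pow_succ_div_sub fun i => norm_pos_iff.1 (norm_x_pos i)]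
  ring

/-- The multivariate generalized Lambert series identity. -/
theorem multivariate_generalized_lambert (a : ℕ → ℂ) (R : ℝ) (hR : 0 < R)
    (ha : ∀ u : ℂ, ‖u‖ < R → Summable (fun n : ℕ => ‖a n * u ^ n‖))
    (m : ℕ) (hm : 1 ≤ m) (l x y : Fin m → ℂ) (z : ℂ)
    (hl : ∀ i, ‖l i‖ < 1) (hyx : ∀ i, ‖y i‖ < ‖x i‖)
    (hxz : ‖(∏ i, x i) * z‖ < R) :
    Summable (fun k : Fin m → ℕ =>
      ‖(∏ i, (y i / x i) ^ k i) *
        ∑' j : ℕ, a j * ((∏ i, l i ^ k i) * (∏ i, x i) * z) ^ j‖) ∧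
    ∑' n : ℕ, a n * (∏ i, x i ^ (n + 1) / (x i - l i ^ n * y i)) * z ^ n
      = ∑' k : Fin m → ℕ, (∏ i, (y i / x i) ^ k i) *
          ∑' j : ℕ, a j * ((∏ i, l i ^ k i) * (∏ i, x i) * z) ^ j :=
  (multivariate_generalized_lambert_general (ha _ hxz) (fun i => (hl i).le) hyx).imp_right
    HasSum.tsum_eq
end

section
/- Let λ, x, y, z be complex numbers with |λ| < 1, |y| < |x|, and |x·z| < 1. Then ∑_{n=0}^∞ x^{n+1}/(x − λ^n y) · z^n = ∑_{k=0}^∞ (y/x)^k / (1 − λ^k x z). -/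
/-!
Expanding `1 / (1 - l^n (y / x))` as a geometric series turns the left side into the double series
`∑ₙ ∑ₖ (x z)^n (y / x)^k l^(n k)`. It converges absolutely because `‖l^(n k)‖ ≤ 1`, and summing it
over `n` first gives a geometric series in `l^k x z`.
-/

section SeminormedRing

variable {R ι : Type*} [SeminormedRing R]

theorem norm_mul_lt_one_of_le_of_lt {u v : R} (hu : ‖u‖ ≤ 1) (hv : ‖v‖ < 1) : ‖u * v‖ < 1 :=
  (norm_mul_le u v).trans_lt (mul_lt_one_of_nonneg_of_lt_one_right hu (norm_nonneg v) hv)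

theorem norm_pow_le_one_of_norm_le_one [NormOneClass R] {u : R} (hu : ‖u‖ ≤ 1) (n : ℕ) :
    ‖u ^ n‖ ≤ 1 :=
  (norm_pow_le u n).trans (pow_le_one₀ (norm_nonneg u) hu)

theorem summable_mul_mul_pow_of_norm_le_one_s6 [NormOneClass R] [CompleteSpace R] {b c : ι → R} {q : R}
    (hb : Summable fun i ↦ ‖b i‖) (hc : ∀ i, ‖c i‖ ≤ 1) (hq : ‖q‖ < 1) :
    Summable fun p : ι × ℕ ↦ b p.1 * (c p.1 * q) ^ p.2 := by
  have hgeom : Summable fun k : ℕ ↦ ‖q‖ ^ k := summable_geometric_of_lt_one (norm_nonneg q) hq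
  have hprod : Summable fun p : ι × ℕ ↦ ‖b p.1‖ * ‖q‖ ^ p.2 :=
    hb.mul_of_nonneg hgeom (fun i ↦ norm_nonneg (b i)) fun k ↦ pow_nonneg (norm_nonneg q) k
  refine hprod.of_norm_bounded fun ⟨i, k⟩ ↦ ?_
  have hcq : ‖c i * q‖ ≤ ‖q‖ :=
    (norm_mul_le _ _).trans (mul_le_of_le_one_left (norm_nonneg q) (hc i))
  calc ‖b i * (c i * q) ^ k‖
      ≤ ‖b i‖ * ‖(c i * q) ^ k‖ := norm_mul_le _ _
    _ ≤ ‖b i‖ * ‖c i * q‖ ^ k := by gcongr; exact norm_pow_le _ _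
    _ ≤ ‖b i‖ * ‖q‖ ^ k := by gcongr

end SeminormedRing

section NormedField

variable {𝕜 ι : Type*} [NormedField 𝕜] [CompleteSpace 𝕜]

theorem tsum_div_one_sub_mul {b c : ι → 𝕜} {q : 𝕜} (hb : Summable fun i ↦ ‖b i‖)
    (hc : ∀ i, ‖c i‖ ≤ 1) (hq : ‖q‖ < 1) :
    ∑' i, b i / (1 - c i * q) = ∑' k : ℕ, q ^ k * ∑' i, b i * c i ^ k := by
  have hcq (i : ι) : ‖c i * q‖ < 1 := norm_mul_lt_one_of_le_of_lt (hc i) hq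
  calc ∑' i, b i / (1 - c i * q)
      = ∑' i, ∑' k : ℕ, b i * (c i * q) ^ k := by
        simp_rw [tsum_mul_left, tsum_geometric_of_norm_lt_one (hcq _), div_eq_mul_inv]
    _ = ∑' k : ℕ, ∑' i, b i * (c i * q) ^ k :=
        (Summable.tsum_comm (f := fun i k ↦ b i * (c i * q) ^ k)
          (summable_mul_mul_pow_of_norm_le_one_s6 hb hc hq)).symm
    _ = ∑' k : ℕ, q ^ k * ∑' i, b i * c i ^ k := by
        simp_rw [← tsum_mul_left]
        exact tsum_congr fun k ↦ tsum_congr fun i ↦ by ring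

theorem tsum_lambert_eq_tsum_mul_tsum {a : ℕ → 𝕜} {l x y z : 𝕜}
    (hl : ‖l‖ ≤ 1) (hyx : ‖y‖ < ‖x‖) (ha : Summable fun n ↦ ‖a n * (x * z) ^ n‖) :
    ∑' n : ℕ, a n * x ^ (n + 1) / (x - l ^ n * y) * z ^ n
      = ∑' k : ℕ, (y / x) ^ k * ∑' n : ℕ, a n * (l ^ k * x * z) ^ n := by
  have hx : 0 < ‖x‖ := (norm_nonneg y).trans_lt hyx
  have hx0 : x ≠ 0 := norm_pos_iff.mp hx
  have hq : ‖y / x‖ < 1 := by rwa [norm_div, div_lt_one hx]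
  have hterm (n : ℕ) : a n * x ^ (n + 1) / (x - l ^ n * y) * z ^ n
      = a n * (x * z) ^ n / (1 - l ^ n * (y / x)) := by
    have hfactor : x - l ^ n * y = x * (1 - l ^ n * (y / x)) := by field_simp
    rw [hfactor, pow_succ', mul_left_comm, mul_div_mul_left _ _ hx0]
    ring
  have hpow (k n : ℕ) : a n * (l ^ k * x * z) ^ n = a n * (x * z) ^ n * (l ^ n) ^ k := by ring
  simp_rw [hterm, hpow]
  exact tsum_div_one_sub_mul ha (norm_pow_le_one_of_norm_le_one hl) hq

theorem generalized_lambert_geometric_general (l x y z : 𝕜)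
    (hl : ‖l‖ ≤ 1) (hyx : ‖y‖ < ‖x‖) (hxz : ‖x * z‖ < 1) :
    ∑' n : ℕ, x ^ (n + 1) / (x - l ^ n * y) * z ^ n
      = ∑' k : ℕ, (y / x) ^ k / (1 - l ^ k * x * z) := by
  have hgeom (k : ℕ) : ∑' n : ℕ, (l ^ k * x * z) ^ n = (1 - l ^ k * x * z)⁻¹ := by
    refine tsum_geometric_of_norm_lt_one ?_
    rw [mul_assoc]
    exact norm_mul_lt_one_of_le_of_lt (norm_pow_le_one_of_norm_le_one hl k) hxz
  have hsum : Summable fun n : ℕ ↦ ‖1 * (x * z) ^ n‖ := by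
    simpa using summable_geometric_of_lt_one (norm_nonneg (x * z)) hxz
  simpa only [one_mul, hgeom, ← div_eq_mul_inv] using
    tsum_lambert_eq_tsum_mul_tsum (a := fun _ ↦ 1) hl hyx hsum

end NormedField

/-- Generalized Lambert series for the constant sequence `aₙ = 1`,
with generating function `f(u) = 1/(1−u)`. -/
theorem generalized_lambert_geometric (l x y z : ℂ)
    (hl : ‖l‖ < 1) (hyx : ‖y‖ < ‖x‖) (hxz : ‖x * z‖ < 1) :
    ∑' n : ℕ, x ^ (n + 1) / (x - l ^ n * y) * z ^ n
      = ∑' k : ℕ, (y / x) ^ k / (1 - l ^ k * x * z) :=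
  generalized_lambert_geometric_general l x y z hl.le hyx hxz
end

section
/- Let λ, x, y, z be complex numbers with 0 < |λ| < 1, |y| < |x|, 0 < |x·z| < 1. Then ∑_{n=0}^∞ (1/(n+1)) · x^{n+1}/(x − λ^n y) · z^n = −∑_{k=0}^∞ (y/(λx))^k · log(1 − λ^k x z)/(x z), where log denotes the principal branch of the complex logarithm. -/
/-!
Since `‖λⁿ y / x‖ < 1`, each factor `x / (x - λⁿ y)` is a geometric series in `λⁿ y / x`. This
turns the generalized Lambert series into the absolutely convergent double series with terms
`aₙ (x z)ⁿ (λⁿ y / x)ᵏ`. Because `(λⁿ)ᵏ = (λᵏ)ⁿ`, summing over `n` first gives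
`∑ₖ (y / x)ᵏ f(λᵏ x z)` with `f(u) = ∑ₙ aₙ uⁿ`. For `aₙ = 1 / (n + 1)` the generating function is
`f(u) = -log (1 - u) / u`, and dividing by `u = λᵏ x z` changes `(y / x)ᵏ` into `(y / (λ x))ᵏ`.
-/

theorem summable_mul_pow_of_norm_le {ι R : Type*} [NormedRing R] [NormOneClass R]
    [CompleteSpace R] {b c : ι → R} {ρ : ℝ} (hb : Summable fun i => ‖b i‖)
    (hρ₀ : 0 ≤ ρ) (hρ : ρ < 1) (hc : ∀ i, ‖c i‖ ≤ ρ) :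
    Summable fun p : ι × ℕ => b p.1 * c p.1 ^ p.2 := by
  have hprod : Summable fun p : ι × ℕ => ‖b p.1‖ * ρ ^ p.2 :=
    hb.mul_of_nonneg (summable_geometric_of_lt_one hρ₀ hρ) (fun i => norm_nonneg (b i))
      fun k => pow_nonneg hρ₀ k
  refine hprod.of_norm_bounded fun p => ?_
  calc ‖b p.1 * c p.1 ^ p.2‖ ≤ ‖b p.1‖ * ‖c p.1‖ ^ p.2 :=
        (norm_mul_le _ _).trans (by gcongr; exact norm_pow_le _ _)
    _ ≤ ‖b p.1‖ * ρ ^ p.2 := by gcongr; exact hc p.1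

theorem norm_pow_mul_le_of_norm_le_one {R : Type*} [NormedRing R] [NormOneClass R] {q : R}
    (hq : ‖q‖ ≤ 1) (r : R) (n : ℕ) : ‖q ^ n * r‖ ≤ ‖r‖ :=
  (norm_mul_le _ _).trans <| mul_le_of_le_one_left (norm_nonneg r) <|
    (norm_pow_le q n).trans (pow_le_one₀ (norm_nonneg q) hq)

section GeneralizedLambert

variable {𝕜 : Type*} [NormedField 𝕜] {x y : 𝕜}

theorem hasSum_div_pow_of_norm_lt (h : ‖y‖ < ‖x‖) :
    HasSum (fun k : ℕ => (y / x) ^ k) (x / (x - y)) := by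
  have hx : 0 < ‖x‖ := (norm_nonneg y).trans_lt h
  have hratio : ‖y / x‖ < 1 := by rwa [norm_div, div_lt_one hx]
  have hinv : (1 - y / x)⁻¹ = x / (x - y) := by
    rw [one_sub_div (norm_pos_iff.mp hx), inv_div]
  exact hinv ▸ hasSum_geometric_of_norm_lt_one hratio

theorem exists_hasSum_generalized_lambert [CompleteSpace 𝕜] {a f : ℕ → 𝕜} {l z : 𝕜}
    (hl : ‖l‖ ≤ 1) (hyx : ‖y‖ < ‖x‖) (ha : Summable fun n => ‖a n * (x * z) ^ n‖)
    (hf : ∀ k, HasSum (fun n => a n * (l ^ k * x * z) ^ n) (f k)) :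
    ∃ s, HasSum (fun n => a n * (x ^ (n + 1) / (x - l ^ n * y)) * z ^ n) s ∧
      HasSum (fun k => (y / x) ^ k * f k) s := by
  have hx : 0 < ‖x‖ := (norm_nonneg y).trans_lt hyx
  have hnorm (n : ℕ) : ‖l ^ n * y‖ ≤ ‖y‖ := norm_pow_mul_le_of_norm_le_one hl y n
  have hratio (n : ℕ) : ‖l ^ n * y / x‖ ≤ ‖y‖ / ‖x‖ := by
    rw [norm_div]
    gcongr
    exact hnorm n
  have hdouble : Summable fun p : ℕ × ℕ => a p.1 * (x * z) ^ p.1 * (l ^ p.1 * y / x) ^ p.2 :=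
    summable_mul_pow_of_norm_le (b := fun n => a n * (x * z) ^ n) (c := fun n => l ^ n * y / x)
      ha (div_nonneg (norm_nonneg y) hx.le) ((div_lt_one hx).mpr hyx) hratio
  have hrow (n : ℕ) : HasSum (fun k => a n * (x * z) ^ n * (l ^ n * y / x) ^ k)
      (a n * (x ^ (n + 1) / (x - l ^ n * y)) * z ^ n) := by
    have hterm : a n * (x ^ (n + 1) / (x - l ^ n * y)) * z ^ n =
        a n * (x * z) ^ n * (x / (x - l ^ n * y)) := by ring
    rw [hterm]
    exact (hasSum_div_pow_of_norm_lt ((hnorm n).trans_lt hyx)).mul_left _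
  have hcolumn (k : ℕ) : HasSum (fun n => a n * (x * z) ^ n * (l ^ n * y / x) ^ k)
      ((y / x) ^ k * f k) := by
    refine ((hf k).mul_left ((y / x) ^ k)).congr_fun fun n => ?_
    ring
  obtain ⟨s, hs⟩ := hdouble
  exact ⟨s, hs.prod_fiberwise hrow,
    ((Equiv.prodComm ℕ ℕ).hasSum_iff.mpr hs).prod_fiberwise hcolumn⟩

end GeneralizedLambert

theorem hasSum_one_div_succ_mul_pow {u : ℂ} (hu₀ : u ≠ 0) (hu : ‖u‖ < 1) :
    HasSum (fun n : ℕ => 1 / (n + 1 : ℂ) * u ^ n) (-Complex.log (1 - u) / u) := by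
  have hlog : HasSum (fun n : ℕ => u ^ (n + 1) / (n + 1 : ℂ)) (-Complex.log (1 - u)) := by
    simpa using (hasSum_nat_add_iff' 1).mpr (Complex.hasSum_taylorSeries_neg_log hu)
  refine (hlog.div_const u).congr_fun fun n => ?_
  rw [pow_succ, div_right_comm, mul_div_cancel_right₀ _ hu₀, one_div_mul_eq_div]

theorem generalized_lambert_log_general {l x y z : ℂ} (hl₀ : l ≠ 0) (hl : ‖l‖ ≤ 1)
    (hyx : ‖y‖ < ‖x‖) (hxz₀ : x * z ≠ 0) (hxz : ‖x * z‖ < 1) :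
    ∃ s, HasSum (fun n : ℕ => (1 / (n + 1 : ℂ)) * (x ^ (n + 1) / (x - l ^ n * y)) * z ^ n) s ∧
      HasSum (fun k : ℕ => (y / (l * x)) ^ k *
        (Complex.log (1 - l ^ k * x * z) / (x * z))) (-s) := by
  have hgen (k : ℕ) : HasSum (fun n : ℕ => 1 / (n + 1 : ℂ) * (l ^ k * x * z) ^ n)
      (-Complex.log (1 - l ^ k * x * z) / (l ^ k * x * z)) := by
    rw [mul_assoc (l ^ k)]
    exact hasSum_one_div_succ_mul_pow (mul_ne_zero (pow_ne_zero k hl₀) hxz₀)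
      ((norm_pow_mul_le_of_norm_le_one hl (x * z) k).trans_lt hxz)
  obtain ⟨s, hlambert, hlog⟩ := exists_hasSum_generalized_lambert hl hyx
    (hasSum_one_div_succ_mul_pow hxz₀ hxz).summable.norm hgen
  refine ⟨s, hlambert, ?_⟩
  refine hlog.neg.congr_fun fun k => ?_
  ring

/-- Generalized Lambert series for `aₙ = 1/(n+1)`, with generating function
`f(u) = −log(1−u)/u` (principal complex logarithm). -/
theorem generalized_lambert_log (l x y z : ℂ)
    (hl0 : 0 < ‖l‖) (hl : ‖l‖ < 1) (hyx : ‖y‖ < ‖x‖)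
    (hxz0 : 0 < ‖x * z‖) (hxz : ‖x * z‖ < 1) :
    ∑' n : ℕ, (1 / (n + 1 : ℂ)) * (x ^ (n + 1) / (x - l ^ n * y)) * z ^ n
      = -∑' k : ℕ, (y / (l * x)) ^ k *
          (Complex.log (1 - l ^ k * x * z) / (x * z)) := by
  obtain ⟨s, hlambert, hlog⟩ := generalized_lambert_log_general
    (norm_pos_iff.mp hl0) hl.le hyx (norm_pos_iff.mp hxz0) hxz
  rw [hlambert.tsum_eq, hlog.tsum_eq, neg_neg]
end

section
/- Let λ, x, y, z be complex numbers with |λ| < 1 and |y| < |x|. Then ∑_{n=0}^∞ (1/n!) · x^{n+1}/(x − λ^n y) · z^n = ∑_{k=0}^∞ (y/x)^k · exp(λ^k x z), where exp is the complex exponential function. -/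
/-!
Since `‖l ^ n * (y / x)‖ < 1`, the factor `x / (x - l ^ n * y)` is the sum of the geometric series
`∑ₖ (l ^ n * (y / x)) ^ k = ∑ₖ (y / x) ^ k * (l ^ k) ^ n`. The resulting double series is dominated
by the product of an absolutely convergent series in `n` and a geometric series in `k`, so the
order of summation may be exchanged. Summing over `n` first evaluates the generating function of
the coefficients at the dilated argument.
-/

section Lambert

variable {ι 𝕜 E : Type*} [NormedField 𝕜] [NormedAddCommGroup E] [NormedSpace 𝕜 E]
  [CompleteSpace E]

theorem summable_mul_pow_smul {u : ι → 𝕜} {q : 𝕜} {b : ι → E} (hu : ∀ i, ‖u i‖ ≤ 1)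
    (hq : ‖q‖ < 1) (hb : Summable fun i => ‖b i‖) :
    Summable fun p : ι × ℕ => (u p.1 * q) ^ p.2 • b p.1 := by
  have hdom : Summable fun p : ι × ℕ => ‖b p.1‖ * ‖q‖ ^ p.2 :=
    hb.mul_of_nonneg (summable_geometric_of_lt_one (norm_nonneg q) hq)
      (fun _ => norm_nonneg _) (fun _ => by positivity)
  refine .of_norm_bounded hdom fun ⟨i, k⟩ => ?_
  calc ‖(u i * q) ^ k • b i‖ = ‖b i‖ * (‖u i‖ * ‖q‖) ^ k := by
        rw [norm_smul, norm_pow, norm_mul, mul_comm]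
    _ ≤ ‖b i‖ * ‖q‖ ^ k := by
        gcongr
        exact mul_le_of_le_one_left (norm_nonneg q) (hu i)

theorem tsum_inv_one_sub_mul_smul {u : ι → 𝕜} {q : 𝕜} {b : ι → E} (hu : ∀ i, ‖u i‖ ≤ 1)
    (hq : ‖q‖ < 1) (hb : Summable fun i => ‖b i‖) :
    ∑' i, (1 - u i * q)⁻¹ • b i = ∑' k : ℕ, q ^ k • ∑' i, u i ^ k • b i := by
  have hgeom (i : ι) : HasSum (fun k : ℕ => (u i * q) ^ k) (1 - u i * q)⁻¹ := by
    refine hasSum_geometric_of_norm_lt_one ?_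
    rw [norm_mul]
    exact (mul_le_of_le_one_left (norm_nonneg q) (hu i)).trans_lt hq
  calc ∑' i, (1 - u i * q)⁻¹ • b i = ∑' i, ∑' k : ℕ, (u i * q) ^ k • b i :=
        tsum_congr fun i => ((hgeom i).smul_const (b i)).tsum_eq.symm
    _ = ∑' k : ℕ, ∑' i, (u i * q) ^ k • b i :=
        (summable_mul_pow_smul hu hq hb).tsum_comm.symm
    _ = ∑' k : ℕ, q ^ k • ∑' i, u i ^ k • b i := by
        simp only [← tsum_const_smul'', smul_smul, mul_pow, mul_comm]

theorem tsum_lambert_smul {l x y : 𝕜} {a : ℕ → E} (hl : ‖l‖ ≤ 1) (hyx : ‖y‖ < ‖x‖)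
    (ha : Summable fun n => ‖x ^ n • a n‖) :
    ∑' n : ℕ, (x ^ (n + 1) / (x - l ^ n * y)) • a n
      = ∑' k : ℕ, (y / x) ^ k • ∑' n : ℕ, (l ^ k * x) ^ n • a n := by
  have hx_pos : 0 < ‖x‖ := (norm_nonneg y).trans_lt hyx
  have hx : x ≠ 0 := norm_pos_iff.mp hx_pos
  have hq : ‖y / x‖ < 1 := by rwa [norm_div, div_lt_one hx_pos]
  have hl_pow (n : ℕ) : ‖l ^ n‖ ≤ 1 := by
    rw [norm_pow]
    exact pow_le_one₀ (norm_nonneg l) hl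
  have hfactor (n : ℕ) :
      x ^ (n + 1) / (x - l ^ n * y) = (1 - l ^ n * (y / x))⁻¹ * x ^ n := by
    rw [← mul_div_assoc, one_sub_div hx, inv_div, pow_succ']
    ring
  have hpow (k n : ℕ) : (l ^ k * x) ^ n = (l ^ n) ^ k * x ^ n := by
    rw [mul_pow, pow_right_comm]
  simp only [hfactor, hpow, mul_smul]
  exact tsum_inv_one_sub_mul_smul hl_pow hq ha

end Lambert

theorem generalized_lambert_exp_general {𝕜 𝔸 : Type*} [NontriviallyNormedField 𝕜] [CharZero 𝕜]
    [ContinuousSMul ℚ 𝕜] [NormedRing 𝔸] [NormedAlgebra 𝕜 𝔸] [CompleteSpace 𝔸]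
    {l x y : 𝕜} (hl : ‖l‖ ≤ 1) (hyx : ‖y‖ < ‖x‖) (z : 𝔸) :
    ∑' n : ℕ, ((1 / (Nat.factorial n : 𝕜)) * (x ^ (n + 1) / (x - l ^ n * y))) • z ^ n
      = ∑' k : ℕ, (y / x) ^ k • NormedSpace.exp ((l ^ k * x) • z) := by
  have hexp_term (c : 𝕜) (n : ℕ) :
      (Nat.factorial n : 𝕜)⁻¹ • (c • z) ^ n = c ^ n • (Nat.factorial n : 𝕜)⁻¹ • z ^ n := by
    rw [smul_pow, smul_comm]
  have hsummable : Summable fun n : ℕ => ‖x ^ n • (Nat.factorial n : 𝕜)⁻¹ • z ^ n‖ := by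
    simpa only [hexp_term] using NormedSpace.norm_expSeries_summable' (𝕂 := 𝕜) (x • z)
  have hlambert_term (c : 𝕜) (n : ℕ) :
      (1 / (Nat.factorial n : 𝕜) * c) • z ^ n = c • (Nat.factorial n : 𝕜)⁻¹ • z ^ n := by
    rw [one_div, mul_comm, mul_smul]
  simp only [NormedSpace.exp_eq_tsum 𝕜, hexp_term, hlambert_term]
  exact tsum_lambert_smul hl hyx hsummable

/-- Generalized Lambert series for `aₙ = 1/n!`, with generating function `exp`. -/
theorem generalized_lambert_exp (l x y z : ℂ)
    (hl : ‖l‖ < 1) (hyx : ‖y‖ < ‖x‖) :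
    ∑' n : ℕ, (1 / (Nat.factorial n : ℂ)) * (x ^ (n + 1) / (x - l ^ n * y)) * z ^ n
      = ∑' k : ℕ, (y / x) ^ k * Complex.exp (l ^ k * x * z) := by
  simpa only [Complex.exp_eq_exp_ℂ, smul_eq_mul] using
    generalized_lambert_exp_general hl.le hyx z
end

section
/- Let λ, x, y, t, s be complex numbers with |λ| < 1 and |y| < |x|. Then ∑_{n=0}^∞ ∑_{m=0}^∞ (1/(n! · m!)) · x^{n+m+1}/(x − λ^{n+m} y) · t^n s^m = ∑_{k=0}^∞ (y/x)^k · exp(λ^k (t + s) x), where exp is the complex exponential and the left-hand side is an absolutely convergent double series. -/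
/-!
Since `x / (x - w * y) = (1 - w * (y / x))⁻¹ = ∑ₖ wᵏ (y / x)ᵏ`, each term of the series is
`aₙ (t x)ⁿ bₘ (s x)ᵐ` times a geometric series with `w = λⁿ⁺ᵐ`. As `‖w‖ ≤ 1`, the resulting triple
series is dominated by `∑ ‖aₙ (t x)ⁿ‖ ‖bₘ (s x)ᵐ‖ ‖y / x‖ᵏ`. Summing over `(n, m)` first replaces
`t x` and `s x` by `λᵏ t x` and `λᵏ s x`, so the sum over `(n, m)` factors into two power series.
-/

section GeometricWeights

variable {ι 𝕜 : Type*} [NormedField 𝕜] {a z : ι → 𝕜} {q : 𝕜}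

theorem norm_mul_lt_one_of_norm_le_one {w : 𝕜} (hw : ‖w‖ ≤ 1) (hq : ‖q‖ < 1) : ‖w * q‖ < 1 := by
  rw [norm_mul]
  exact mul_lt_one_of_nonneg_of_lt_one_right hw (norm_nonneg q) hq

theorem norm_inv_one_sub_mul_le {w : 𝕜} (hw : ‖w‖ ≤ 1) (hq : ‖q‖ < 1) :
    ‖(1 - w * q)⁻¹‖ ≤ (1 - ‖q‖)⁻¹ := by
  rw [norm_inv]
  refine inv_anti₀ (sub_pos.mpr hq) ?_
  calc 1 - ‖q‖ ≤ 1 - ‖w * q‖ := by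
        rw [norm_mul]
        exact sub_le_sub_left (mul_le_of_le_one_left (norm_nonneg q) hw) 1
    _ ≤ ‖1 - w * q‖ := by simpa only [norm_one] using norm_sub_norm_le 1 (w * q)

theorem summable_norm_mul_inv_one_sub_mul (ha : Summable fun i ↦ ‖a i‖) (hz : ∀ i, ‖z i‖ ≤ 1)
    (hq : ‖q‖ < 1) : Summable fun i ↦ ‖a i * (1 - z i * q)⁻¹‖ := by
  refine (ha.mul_right (1 - ‖q‖)⁻¹).of_nonneg_of_le (fun _ ↦ norm_nonneg _) fun i ↦ ?_
  rw [norm_mul]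
  gcongr
  exact norm_inv_one_sub_mul_le (hz i) hq

theorem summable_norm_mul_mul_pow_s14 (ha : Summable fun i ↦ ‖a i‖) (hz : ∀ i, ‖z i‖ ≤ 1)
    (hq : ‖q‖ < 1) : Summable fun p : ι × ℕ ↦ ‖a p.1 * (z p.1 * q) ^ p.2‖ := by
  have summable_dominating := ha.mul_norm (summable_norm_geometric_of_norm_lt_one hq)
  refine summable_dominating.of_nonneg_of_le (fun _ ↦ norm_nonneg _) fun p ↦ ?_
  simp only [norm_mul, norm_pow]
  gcongr
  exact mul_le_of_le_one_left (norm_nonneg q) (hz p.1)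

theorem tsum_mul_inv_one_sub_mul [CompleteSpace 𝕜] (ha : Summable fun i ↦ ‖a i‖)
    (hz : ∀ i, ‖z i‖ ≤ 1) (hq : ‖q‖ < 1) :
    ∑' i, a i * (1 - z i * q)⁻¹ = ∑' k : ℕ, q ^ k * ∑' i, a i * z i ^ k :=
  calc ∑' i, a i * (1 - z i * q)⁻¹ = ∑' i, ∑' k : ℕ, a i * (z i * q) ^ k :=
        tsum_congr fun i ↦ by
          rw [tsum_mul_left,
            tsum_geometric_of_norm_lt_one (norm_mul_lt_one_of_norm_le_one (hz i) hq)]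
    _ = ∑' k : ℕ, ∑' i, a i * (z i * q) ^ k :=
        (Summable.tsum_comm (f := fun i (k : ℕ) ↦ a i * (z i * q) ^ k)
          (summable_norm_mul_mul_pow_s14 ha hz hq).of_norm).symm
    _ = ∑' k : ℕ, q ^ k * ∑' i, a i * z i ^ k :=
        tsum_congr fun k ↦ by
          rw [← tsum_mul_left]
          exact tsum_congr fun i ↦ by ring

end GeometricWeights

section LambertRogers

variable {𝕜 : Type*} [NormedField 𝕜] {a b : ℕ → 𝕜} {l x y t s : 𝕜}

theorem norm_pow_le_one_of_norm_le_one_s14 (hl : ‖l‖ ≤ 1) (N : ℕ) : ‖l ^ N‖ ≤ 1 := by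
  rw [norm_pow]
  exact pow_le_one₀ (norm_nonneg l) hl

theorem norm_div_lt_one_of_norm_lt_s14 (hyx : ‖y‖ < ‖x‖) : ‖y / x‖ < 1 := by
  rwa [norm_div, div_lt_one ((norm_nonneg y).trans_lt hyx)]

theorem summable_norm_mul_pow_of_norm_le_one {c u : 𝕜} (ha : Summable fun n ↦ ‖a n * u ^ n‖)
    (hc : ‖c‖ ≤ 1) : Summable fun n ↦ ‖a n * (c * u) ^ n‖ := by
  refine ha.of_nonneg_of_le (fun _ ↦ norm_nonneg _) fun n ↦ ?_
  simp only [norm_mul, norm_pow]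
  gcongr
  exact mul_le_of_le_one_left (norm_nonneg u) hc

theorem tsum_prod_mul_pow_add [CompleteSpace 𝕜] {c u v : 𝕜}
    (ha : Summable fun n ↦ ‖a n * u ^ n‖) (hb : Summable fun m ↦ ‖b m * v ^ m‖) (hc : ‖c‖ ≤ 1) :
    ∑' p : ℕ × ℕ, a p.1 * u ^ p.1 * (b p.2 * v ^ p.2) * c ^ (p.1 + p.2) =
      (∑' n, a n * (c * u) ^ n) * ∑' m, b m * (c * v) ^ m := by
  have hac := summable_norm_mul_pow_of_norm_le_one ha hc
  have hbc := summable_norm_mul_pow_of_norm_le_one hb hc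
  rw [tsum_mul_tsum_of_summable_norm hac hbc]
  exact tsum_congr fun p ↦ by ring

theorem lambertRogers_term_eq (hx : x ≠ 0) (α β w : 𝕜) (n m : ℕ) :
    α * β * (x ^ (n + m + 1) / (x - w * y)) * t ^ n * s ^ m =
      α * (t * x) ^ n * (β * (s * x) ^ m) * (1 - w * (y / x))⁻¹ := by
  have one_sub_eq : 1 - w * (y / x) = (x - w * y) / x := by field_simp
  rw [one_sub_eq, inv_div]
  ring

theorem summable_norm_lambertRogers (ha : Summable fun n ↦ ‖a n * (t * x) ^ n‖)
    (hb : Summable fun m ↦ ‖b m * (s * x) ^ m‖) (hl : ‖l‖ ≤ 1) (hyx : ‖y‖ < ‖x‖) :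
    Summable fun p : ℕ × ℕ ↦
      ‖a p.1 * b p.2 * (x ^ (p.1 + p.2 + 1) / (x - l ^ (p.1 + p.2) * y)) * t ^ p.1 * s ^ p.2‖ := by
  have hx : x ≠ 0 := norm_pos_iff.mp ((norm_nonneg y).trans_lt hyx)
  simp only [lambertRogers_term_eq hx]
  have summable_coeff := ha.mul_norm hb
  exact summable_norm_mul_inv_one_sub_mul summable_coeff
    (fun p ↦ norm_pow_le_one_of_norm_le_one_s14 hl (p.1 + p.2)) (norm_div_lt_one_of_norm_lt_s14 hyx)

theorem tsum_lambertRogers [CompleteSpace 𝕜] (ha : Summable fun n ↦ ‖a n * (t * x) ^ n‖)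
    (hb : Summable fun m ↦ ‖b m * (s * x) ^ m‖) (hl : ‖l‖ ≤ 1) (hyx : ‖y‖ < ‖x‖) :
    ∑' n : ℕ, ∑' m : ℕ,
        a n * b m * (x ^ (n + m + 1) / (x - l ^ (n + m) * y)) * t ^ n * s ^ m =
      ∑' k : ℕ, (y / x) ^ k *
        ((∑' n, a n * (l ^ k * (t * x)) ^ n) * ∑' m, b m * (l ^ k * (s * x)) ^ m) := by
  have hx : x ≠ 0 := norm_pos_iff.mp ((norm_nonneg y).trans_lt hyx)
  rw [← (summable_norm_lambertRogers ha hb hl hyx).of_norm.tsum_prod]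
  simp only [lambertRogers_term_eq hx]
  have summable_coeff := ha.mul_norm hb
  rw [tsum_mul_inv_one_sub_mul summable_coeff
    (fun p ↦ norm_pow_le_one_of_norm_le_one_s14 hl (p.1 + p.2)) (norm_div_lt_one_of_norm_lt_s14 hyx)]
  refine tsum_congr fun k ↦ ?_
  simp only [pow_right_comm l _ k]
  rw [tsum_prod_mul_pow_add ha hb (norm_pow_le_one_of_norm_le_one_s14 hl k)]

end LambertRogers

theorem summable_norm_one_div_factorial_mul_pow {𝕜 : Type*} [NormedField 𝕜] [NormedAlgebra ℚ 𝕜]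
    (u : 𝕜) :
    Summable fun n : ℕ ↦ ‖1 / (n.factorial : 𝕜) * u ^ n‖ := by
  simpa only [one_div_mul_eq_div] using NormedSpace.norm_expSeries_div_summable u

theorem tsum_one_div_factorial_mul_pow {𝕜 : Type*} [Field 𝕜] [CharZero 𝕜] [TopologicalSpace 𝕜]
    [IsTopologicalRing 𝕜] (u : 𝕜) :
    ∑' n : ℕ, 1 / (n.factorial : 𝕜) * u ^ n = NormedSpace.exp u := by
  simp only [one_div_mul_eq_div, NormedSpace.exp_eq_tsum_div]

theorem generalized_lambert_rogers_exp_general {𝕜 : Type*} [NormedField 𝕜] [NormedAlgebra ℚ 𝕜]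
    [CompleteSpace 𝕜] (l x y t s : 𝕜) (hl : ‖l‖ ≤ 1) (hyx : ‖y‖ < ‖x‖) :
    Summable (fun p : ℕ × ℕ =>
      ‖(1 / ((Nat.factorial p.1 : 𝕜) * (Nat.factorial p.2 : 𝕜))) *
        (x ^ (p.1 + p.2 + 1) / (x - l ^ (p.1 + p.2) * y)) * t ^ p.1 * s ^ p.2‖) ∧
    ∑' n : ℕ, ∑' m : ℕ, (1 / ((Nat.factorial n : 𝕜) * (Nat.factorial m : 𝕜))) *
        (x ^ (n + m + 1) / (x - l ^ (n + m) * y)) * t ^ n * s ^ m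
      = ∑' k : ℕ, (y / x) ^ k * NormedSpace.exp (l ^ k * (t + s) * x) := by
  have : CharZero 𝕜 := algebraRat.charZero 𝕜
  have ht := summable_norm_one_div_factorial_mul_pow (t * x)
  have hs := summable_norm_one_div_factorial_mul_pow (s * x)
  simp only [← one_div_mul_one_div]
  have summable_terms := summable_norm_lambertRogers ht hs hl hyx
  refine ⟨summable_terms, ?_⟩
  rw [tsum_lambertRogers ht hs hl hyx]
  refine tsum_congr fun k ↦ ?_
  rw [tsum_one_div_factorial_mul_pow, tsum_one_div_factorial_mul_pow, ← NormedSpace.exp_add]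
  congr 2
  ring

/-- Rogers-type generalized Lambert series for `aₙ = 1/n!`, `bₘ = 1/m!`. -/
theorem generalized_lambert_rogers_exp (l x y t s : ℂ)
    (hl : ‖l‖ < 1) (hyx : ‖y‖ < ‖x‖) :
    Summable (fun p : ℕ × ℕ =>
      ‖(1 / ((Nat.factorial p.1 : ℂ) * (Nat.factorial p.2 : ℂ))) *
        (x ^ (p.1 + p.2 + 1) / (x - l ^ (p.1 + p.2) * y)) * t ^ p.1 * s ^ p.2‖) ∧
    ∑' n : ℕ, ∑' m : ℕ, (1 / ((Nat.factorial n : ℂ) * (Nat.factorial m : ℂ))) *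
        (x ^ (n + m + 1) / (x - l ^ (n + m) * y)) * t ^ n * s ^ m
      = ∑' k : ℕ, (y / x) ^ k * Complex.exp (l ^ k * (t + s) * x) := by
  rw [Complex.exp_eq_exp_ℂ]
  exact generalized_lambert_rogers_exp_general l x y t s hl.le hyx
end

section
/- Let λ, x, y, z be complex numbers with |λ| < 1 and |y| < |x|. With g(u) = ∑_{n=0}^∞ ((−1)^n/(2n+1)!) u^n (the entire function satisfying g(u²) = sin(u)/u for u ≠ 0), then ∑_{n=0}^∞ ((−1)^n/(2n+1)!) · x^{n+1}/(x − λ^n y) · z^n = ∑_{k=0}^∞ (y/x)^k · g(λ^k x z). -/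
/-!
Since `‖lⁿ y / x‖ ≤ ‖y / x‖ < 1`, each kernel `x / (x - lⁿ y)` is the sum of the geometric series
`∑ₖ (lⁿ y / x)ᵏ`. The bound on the ratios is uniform in `n`, so the double series converges
absolutely, and summing over `n` first collects the generating function at `lᵏ x z`.
-/

open scoped Nat

theorem summable_prod_mul_pow_of_norm_le {ι R : Type*} [NormedRing R] [NormOneClass R]
    [CompleteSpace R] {c w : ι → R} {r : ℝ} (hc : Summable fun i ↦ ‖c i‖) (hr : r < 1)
    (hw : ∀ i, ‖w i‖ ≤ r) :
    Summable fun p : ι × ℕ ↦ c p.1 * w p.1 ^ p.2 := by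
  rcases isEmpty_or_nonempty ι with _ | ⟨⟨i₀⟩⟩
  · exact .of_finite
  have hr₀ : 0 ≤ r := (norm_nonneg _).trans (hw i₀)
  have h_bound : Summable fun p : ι × ℕ ↦ ‖c p.1‖ * r ^ p.2 :=
    hc.mul_of_nonneg (summable_geometric_of_lt_one hr₀ hr) (fun _ ↦ norm_nonneg _)
      (fun _ ↦ pow_nonneg hr₀ _)
  refine h_bound.of_norm_bounded fun ⟨i, k⟩ ↦ ?_
  calc
    ‖c i * w i ^ k‖ ≤ ‖c i‖ * ‖w i‖ ^ k := norm_mul_le_of_le le_rfl (norm_pow_le _ _)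
    _ ≤ ‖c i‖ * r ^ k := by gcongr; exact hw i

theorem tsum_mul_inv_one_sub_eq_tsum_tsum_mul_pow {ι R : Type*} [NormedDivisionRing R]
    [CompleteSpace R] {c w : ι → R} {r : ℝ} (hc : Summable fun i ↦ ‖c i‖) (hr : r < 1)
    (hw : ∀ i, ‖w i‖ ≤ r) :
    ∑' i, c i * (1 - w i)⁻¹ = ∑' k : ℕ, ∑' i, c i * w i ^ k := by
  calc
    ∑' i, c i * (1 - w i)⁻¹ = ∑' i, ∑' k : ℕ, c i * w i ^ k := by
      refine tsum_congr fun i ↦ ?_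
      rw [tsum_mul_left, tsum_geometric_of_norm_lt_one ((hw i).trans_lt hr)]
    _ = ∑' k : ℕ, ∑' i, c i * w i ^ k :=
      (Summable.tsum_comm (f := fun i k ↦ c i * w i ^ k)
        (summable_prod_mul_pow_of_norm_le hc hr hw)).symm

theorem generalized_lambert_sin_general {K : Type*} [NormedField K] [CompleteSpace K]
    {a : ℕ → K} {l x y z : K} (hl : ‖l‖ ≤ 1) (hyx : ‖y‖ < ‖x‖)
    (ha : Summable fun n ↦ ‖a n * (x * z) ^ n‖) :
    ∑' n, a n * (x ^ (n + 1) / (x - l ^ n * y)) * z ^ n =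
      ∑' k : ℕ, (y / x) ^ k * ∑' m, a m * (l ^ k * x * z) ^ m := by
  have hx_pos : 0 < ‖x‖ := (norm_nonneg y).trans_lt hyx
  have hx : x ≠ 0 := norm_pos_iff.mp hx_pos
  have h_ratio : ‖y / x‖ < 1 := by rwa [norm_div, div_lt_one hx_pos]
  have h_ratio_le (n : ℕ) : ‖l ^ n * (y / x)‖ ≤ ‖y / x‖ := by
    rw [norm_mul, norm_pow]
    exact mul_le_of_le_one_left (norm_nonneg _) (pow_le_one₀ (norm_nonneg _) hl)
  have h_kernel (n : ℕ) : x ^ (n + 1) / (x - l ^ n * y) = x ^ n * (1 - l ^ n * (y / x))⁻¹ := by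
    have h_factor : x - l ^ n * y = (1 - l ^ n * (y / x)) * x := by field_simp
    rw [h_factor, pow_succ, mul_div_mul_right _ _ hx, div_eq_mul_inv]
  calc
    ∑' n, a n * (x ^ (n + 1) / (x - l ^ n * y)) * z ^ n
        = ∑' n, a n * (x * z) ^ n * (1 - l ^ n * (y / x))⁻¹ := by
      refine tsum_congr fun n ↦ ?_
      rw [h_kernel]
      ring
    _ = ∑' k : ℕ, ∑' n, a n * (x * z) ^ n * (l ^ n * (y / x)) ^ k :=
      tsum_mul_inv_one_sub_eq_tsum_tsum_mul_pow ha h_ratio h_ratio_le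
    _ = ∑' k : ℕ, (y / x) ^ k * ∑' m, a m * (l ^ k * x * z) ^ m := by
      refine tsum_congr fun k ↦ ?_
      rw [← tsum_mul_left]
      refine tsum_congr fun m ↦ ?_
      ring

theorem summable_norm_neg_one_pow_div_factorial_mul_pow {𝕜 : Type*} [RCLike 𝕜] (w : 𝕜) :
    Summable fun n : ℕ ↦ ‖(-1 : 𝕜) ^ n / ((2 * n + 1)! : 𝕜) * w ^ n‖ := by
  refine (Real.summable_pow_div_factorial ‖w‖).of_nonneg_of_le (fun _ ↦ norm_nonneg _) fun n ↦ ?_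
  calc
    ‖(-1 : 𝕜) ^ n / ((2 * n + 1)! : 𝕜) * w ^ n‖ = ‖w‖ ^ n / (2 * n + 1)! := by
      simp [div_eq_inv_mul]
    _ ≤ ‖w‖ ^ n / n ! := by
      gcongr
      lia

/-- Generalized Lambert series for `aₙ = (−1)ⁿ/(2n+1)!`, with generating function
`g(u) = ∑ₘ ((−1)ᵐ/(2m+1)!) uᵐ` (so that `g(u²) = sin(u)/u` for `u ≠ 0`). -/
theorem generalized_lambert_sin (l x y z : ℂ)
    (hl : ‖l‖ < 1) (hyx : ‖y‖ < ‖x‖) :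
    ∑' n : ℕ, ((-1 : ℂ) ^ n / (Nat.factorial (2 * n + 1) : ℂ)) *
        (x ^ (n + 1) / (x - l ^ n * y)) * z ^ n
      = ∑' k : ℕ, (y / x) ^ k *
          ∑' m : ℕ, ((-1 : ℂ) ^ m / (Nat.factorial (2 * m + 1) : ℂ)) *
            (l ^ k * x * z) ^ m :=
  generalized_lambert_sin_general hl.le hyx
    (summable_norm_neg_one_pow_div_factorial_mul_pow (x * z))
end

section
/- Let d ≥ 1 be a natural number and let λ, x, y, z be complex numbers with |λ| < 1, |y| < |x|, and |x·z| < 1. Then ∑_{n=0}^∞ C(n+d−1, d) · x^{n+1}/(x − λ^n y) · z^n = ∑_{k=0}^∞ (y/x)^k · (λ^k x z)/(1 − λ^k x z)^{d+1}, where C(n+d−1, d) denotes the binomial coefficient. -/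
/-!
Put `q = y / x`. Expanding `x ^ (n + 1) / (x - l ^ n * y) = x ^ n / (1 - l ^ n * q)` as a geometric
series turns the left-hand side into the double series `∑ₙ ∑ₖ aₙ (x z) ^ n (l ^ n q) ^ k`, which
converges absolutely because `‖l‖ ≤ 1`. Since `(l ^ n) ^ k = (l ^ k) ^ n`, summing over `n` first
leaves the generating function of `a`, evaluated at `l ^ k * x * z`.
-/

theorem norm_pow_mul_le_of_norm_le_one_s18 {R : Type*} [SeminormedRing R] [NormOneClass R] {l : R}
    (hl : ‖l‖ ≤ 1) (w : R) (k : ℕ) : ‖l ^ k * w‖ ≤ ‖w‖ := by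
  have hlk : ‖l ^ k‖ ≤ 1 := (norm_pow_le l k).trans (pow_le_one₀ (norm_nonneg l) hl)
  exact (norm_mul_le _ _).trans (mul_le_of_le_one_left (norm_nonneg w) hlk)

theorem summable_mul_pow_mul_pow {R : Type*} [SeminormedRing R] [NormOneClass R] [CompleteSpace R]
    {b : ℕ → R} {l q : R} (hb : Summable fun n ↦ ‖b n‖) (hl : ‖l‖ ≤ 1) (hq : ‖q‖ < 1) :
    Summable (Function.uncurry fun n k : ℕ ↦ b n * (l ^ n * q) ^ k) := by
  have hgeom : Summable fun k : ℕ ↦ ‖q‖ ^ k := summable_geometric_of_lt_one (norm_nonneg q) hq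
  have hdom : Summable fun p : ℕ × ℕ ↦ ‖b p.1‖ * ‖q‖ ^ p.2 :=
    hb.mul_of_nonneg hgeom (fun _ ↦ norm_nonneg _) fun _ ↦ by positivity
  refine Summable.of_norm_bounded hdom fun ⟨n, k⟩ ↦ ?_
  calc ‖b n * (l ^ n * q) ^ k‖
    _ ≤ ‖b n‖ * ‖l ^ n * q‖ ^ k := (norm_mul_le _ _).trans (by gcongr; exact norm_pow_le _ k)
    _ ≤ ‖b n‖ * ‖q‖ ^ k := by gcongr; exact norm_pow_mul_le_of_norm_le_one_s18 hl q n

section Lambert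

variable {𝕜 : Type*} [NormedField 𝕜] [CompleteSpace 𝕜] {b : ℕ → 𝕜} {l q : 𝕜}

theorem tsum_div_one_sub_pow_mul (hb : Summable fun n ↦ ‖b n‖) (hl : ‖l‖ ≤ 1) (hq : ‖q‖ < 1) :
    ∑' n, b n / (1 - l ^ n * q) = ∑' k, q ^ k * ∑' n, b n * (l ^ k) ^ n :=
  calc ∑' n, b n / (1 - l ^ n * q)
    _ = ∑' n, ∑' k, b n * (l ^ n * q) ^ k := by
      refine tsum_congr fun n ↦ ?_
      have hlq : ‖l ^ n * q‖ < 1 := (norm_pow_mul_le_of_norm_le_one_s18 hl q n).trans_lt hq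
      rw [tsum_mul_left, tsum_geometric_of_norm_lt_one hlq, div_eq_mul_inv]
    _ = ∑' k, ∑' n, b n * (l ^ n * q) ^ k := (summable_mul_pow_mul_pow hb hl hq).tsum_comm.symm
    _ = ∑' k, q ^ k * ∑' n, b n * (l ^ k) ^ n := by
      refine tsum_congr fun k ↦ ?_
      rw [← tsum_mul_left]
      refine tsum_congr fun n ↦ ?_
      rw [mul_pow, pow_right_comm]
      ring

theorem tsum_mul_pow_succ_div_sub_mul_pow {a : ℕ → 𝕜} {x y z : 𝕜}
    (ha : Summable fun n ↦ ‖a n * (x * z) ^ n‖) (hl : ‖l‖ ≤ 1) (hyx : ‖y‖ < ‖x‖) :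
    ∑' n, a n * (x ^ (n + 1) / (x - l ^ n * y)) * z ^ n
      = ∑' k, (y / x) ^ k * ∑' n, a n * (l ^ k * x * z) ^ n := by
  have hx_pos : 0 < ‖x‖ := (norm_nonneg y).trans_lt hyx
  have hx : x ≠ 0 := norm_pos_iff.mp hx_pos
  have hq : ‖y / x‖ < 1 := by rwa [norm_div, div_lt_one hx_pos]
  have hterm (n : ℕ) : a n * (x ^ (n + 1) / (x - l ^ n * y)) * z ^ n
      = a n * (x * z) ^ n / (1 - l ^ n * (y / x)) := by
    have hden : x - l ^ n * y = x * (1 - l ^ n * (y / x)) := by field_simp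
    rw [hden, pow_succ', mul_div_mul_left _ _ hx, mul_pow]
    ring
  simp_rw [hterm, tsum_div_one_sub_pow_mul ha hl hq, mul_assoc, ← mul_pow, mul_comm (x * z)]

end Lambert

theorem hasSum_polytopic_mul_pow {𝕜 : Type*} [NormedDivisionRing 𝕜] {d : ℕ} (hd : 1 ≤ d) {u : 𝕜}
    (hu : ‖u‖ < 1) :
    HasSum (fun n : ℕ ↦ ((n + d - 1).choose d : 𝕜) * u ^ n) (u / (1 - u) ^ (d + 1)) := by
  have hzero : ((0 + d - 1).choose d : 𝕜) * u ^ 0 = 0 := by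
    rw [Nat.choose_eq_zero_of_lt (by lia), Nat.cast_zero, zero_mul]
  have hsucc (n : ℕ) : ((n + 1 + d - 1).choose d : 𝕜) * u ^ (n + 1)
      = u * ((n + d).choose d * u ^ n) := by
    rw [Nat.add_right_comm, Nat.add_sub_cancel, pow_succ', (Nat.cast_commute _ u).left_comm]
  rw [← hasSum_nat_add_iff' 1, Finset.sum_range_one, hzero, sub_zero]
  simp_rw [hsucc]
  simpa only [mul_one_div] using (hasSum_choose_mul_geometric_of_norm_lt_one d hu).mul_left u

theorem summable_norm_polytopic_mul_pow {R : Type*} [SeminormedRing R] [NormOneClass R] {d : ℕ}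
    (hd : 1 ≤ d) {u : R} (hu : ‖u‖ < 1) :
    Summable fun n : ℕ ↦ ‖((n + d - 1).choose d : R) * u ^ n‖ := by
  have hreal : Summable fun n : ℕ ↦ ((n + d - 1).choose d : ℝ) * ‖u‖ ^ n :=
    (hasSum_polytopic_mul_pow hd (by rwa [norm_norm])).summable
  have hcast (m : ℕ) : ‖(m : R)‖ ≤ m := by
    simpa only [norm_one, mul_one] using Nat.norm_cast_le (α := R) m
  refine hreal.of_nonneg_of_le (fun _ ↦ norm_nonneg _) fun n ↦ (norm_mul_le _ _).trans ?_
  gcongr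
  exacts [hcast _, norm_pow_le u n]

theorem generalized_lambert_polytopic_general {𝕜 : Type*} [NormedField 𝕜] [CompleteSpace 𝕜]
    {d : ℕ} (hd : 1 ≤ d) {l x y z : 𝕜} (hl : ‖l‖ ≤ 1) (hyx : ‖y‖ < ‖x‖) (hxz : ‖x * z‖ < 1) :
    ∑' n : ℕ, ((n + d - 1).choose d : 𝕜) * (x ^ (n + 1) / (x - l ^ n * y)) * z ^ n
      = ∑' k : ℕ, (y / x) ^ k * (l ^ k * x * z / (1 - l ^ k * x * z) ^ (d + 1)) := by
  have hsum : Summable fun n : ℕ ↦ ‖((n + d - 1).choose d : 𝕜) * (x * z) ^ n‖ :=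
    summable_norm_polytopic_mul_pow hd hxz
  rw [tsum_mul_pow_succ_div_sub_mul_pow hsum hl hyx]
  refine tsum_congr fun k ↦ ?_
  have hk : ‖l ^ k * x * z‖ < 1 := by
    rw [mul_assoc]
    exact (norm_pow_mul_le_of_norm_le_one_s18 hl _ k).trans_lt hxz
  rw [(hasSum_polytopic_mul_pow hd hk).tsum_eq]

/-- Generalized Lambert series for the simplicial `d`-polytopic numbers
`aₙ = C(n+d−1, d)`, with generating function `u/(1−u)^(d+1)`. -/
theorem generalized_lambert_polytopic (d : ℕ) (hd : 1 ≤ d) (l x y z : ℂ)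
    (hl : ‖l‖ < 1) (hyx : ‖y‖ < ‖x‖) (hxz : ‖x * z‖ < 1) :
    ∑' n : ℕ, ((n + d - 1).choose d : ℂ) * (x ^ (n + 1) / (x - l ^ n * y)) * z ^ n
      = ∑' k : ℕ, (y / x) ^ k *
          (l ^ k * x * z / (1 - l ^ k * x * z) ^ (d + 1)) :=
  generalized_lambert_polytopic_general hd hl.le hyx hxz
end
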